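/- Let p be a prime, n ≥ 1, λ a weighting, and g ∈ 𝔽_p[x₁,…,xₙ] a nonzero polynomial. Then either Tr(init_λ(g)) = 0, or Tr(g) ≠ 0 and Tr(init_λ(g)) = init_λ(Tr(g)). -/

import Mathlib

open MvPolynomial

/-- The near-splitting `Tr` on `𝔽_p[x₁,…,xₙ]`: on a monomial `∏ xᵢ^{eᵢ}` it gives
`∏ xᵢ^{(eᵢ+1)/p - 1}` if `p ∣ eᵢ + 1` for all `i`, and `0` otherwise, extended
`𝔽_p`-linearly (note that `c^{1/p} = c` for `c ∈ 𝔽_p`). -/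
noncomputable def Tr (p n : ℕ) (g : MvPolynomial (Fin n) (ZMod p)) :
    MvPolynomial (Fin n) (ZMod p) :=
  ∑ m ∈ g.support,
    if ∀ i, p ∣ (m i + 1) then
      monomial (Finsupp.equivFunOnFinite.symm fun i => (m i + 1) / p - 1) (g.coeff m)
    else 0

/-- A Frobenius splitting is an additive map `φ` with `φ (a^p * b) = a * φ b` and `φ 1 = 1`. -/
def IsFrobeniusSplitting (p : ℕ) {R : Type*} [CommRing R] (φ : R → R) : Prop :=
  (∀ a b : R, φ (a + b) = φ a + φ b) ∧ (∀ a b : R, φ (a ^ p * b) = a * φ b) ∧ φ 1 = 1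

/-- The `λ`-weight of an exponent vector `m` is `∑ᵢ λᵢ·mᵢ`. -/
def wtOf {n : ℕ} (lam : Fin n → ℕ) (m : Fin n →₀ ℕ) : ℕ := ∑ i, lam i * m i

/-- The leading form `init_λ(g)`: the sum of the terms of `g` of maximal `λ`-weight. -/
noncomputable def initForm {R : Type*} [CommRing R] {n : ℕ} (lam : Fin n → ℕ)
    (g : MvPolynomial (Fin n) R) : MvPolynomial (Fin n) R :=
  ∑ m ∈ g.support.filter (fun m => ∀ m' ∈ g.support, wtOf lam m' ≤ wtOf lam m),
    MvPolynomial.monomial m (g.coeff m)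

/-- The initial ideal `init_λ(I)`, spanned by the leading forms of the nonzero
elements of `I`. -/
noncomputable def initIdeal {R : Type*} [CommRing R] {n : ℕ} (lam : Fin n → ℕ)
    (I : Ideal (MvPolynomial (Fin n) R)) : Ideal (MvPolynomial (Fin n) R) :=
  Ideal.span {h | ∃ g ∈ I, g ≠ 0 ∧ initForm lam g = h}

/-!
Coefficientwise, `Tr` reads `g` along the affine map `u ↦ p • u + (p - 1, …, p - 1)` of exponent
vectors, and this map preserves and reflects the order by weight. Hence if some term of maximal
weight of `g` survives under `Tr`, its image has maximal weight in `Tr g`, and the terms of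
maximal weight of `Tr g` are exactly the images of those of `g` that survive.
-/

open Finsupp (weight weight_apply)

section LeadingComponent

variable {σ τ R M N : Type*} [CommSemiring R] [AddCommMonoid M] [AddCommMonoid N]
  {v : σ → M} {w : τ → N} {e : (τ →₀ ℕ) → (σ →₀ ℕ)}
  {T : MvPolynomial σ R → MvPolynomial τ R}

theorem map_weightedHomogeneousComponent_weight
    (hT : ∀ g u, coeff u (T g) = coeff (e u) g)
    (he : ∀ a b, weight v (e a) = weight v (e b) ↔ weight w a = weight w b)
    (g : MvPolynomial σ R) (u : τ →₀ ℕ) :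
    T (weightedHomogeneousComponent v (weight v (e u)) g) =
      weightedHomogeneousComponent w (weight w u) (T g) := by
  classical
  ext a
  simp only [hT, coeff_weightedHomogeneousComponent, he]

variable [SemilatticeSup M] [OrderBot M] [SemilatticeSup N] [OrderBot N]

theorem weight_eq_weightedTotalDegree_iff {g : MvPolynomial σ R} {m : σ →₀ ℕ}
    (hm : m ∈ g.support) :
    weight v m = weightedTotalDegree v g ↔ ∀ m' ∈ g.support, weight v m' ≤ weight v m := by
  calc weight v m = weightedTotalDegree v g
    _ ↔ weightedTotalDegree v g ≤ weight v m :=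
      ⟨Eq.ge, (le_weightedTotalDegree v hm).antisymm⟩
    _ ↔ ∀ m' ∈ g.support, weight v m' ≤ weight v m := Finset.sup_le_iff

theorem weightedTotalDegree_eq_weight_of_coeff_eq_coeff
    {f : MvPolynomial τ R} {g : MvPolynomial σ R} (hfg : ∀ u, coeff u f = coeff (e u) g)
    (he : ∀ a b, weight v (e a) ≤ weight v (e b) → weight w a ≤ weight w b)
    {u : τ →₀ ℕ} (hu : coeff u f ≠ 0) (hdeg : weight v (e u) = weightedTotalDegree v g) :
    weightedTotalDegree w f = weight w u := by
  refine ((weight_eq_weightedTotalDegree_iff (mem_support_iff.2 hu)).2 fun a ha => ?_).symm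
  refine he a u ?_
  rw [hdeg]
  refine le_weightedTotalDegree v (mem_support_iff.2 ?_)
  rwa [← hfg, ← mem_support_iff]

theorem map_weightedHomogeneousComponent_weightedTotalDegree_eq_zero_or
    (hT : ∀ g u, coeff u (T g) = coeff (e u) g)
    (he : ∀ a b, weight v (e a) ≤ weight v (e b) ↔ weight w a ≤ weight w b)
    (g : MvPolynomial σ R) :
    T (weightedHomogeneousComponent v (weightedTotalDegree v g) g) = 0 ∨
      (T g ≠ 0 ∧ T (weightedHomogeneousComponent v (weightedTotalDegree v g) g) =
        weightedHomogeneousComponent w (weightedTotalDegree w (T g)) (T g)) := by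
  classical
  refine or_iff_not_imp_left.2 fun hne => ?_
  obtain ⟨u, hu⟩ := ne_zero_iff.1 hne
  rw [hT, coeff_weightedHomogeneousComponent, ite_ne_right_iff, ← hT] at hu
  obtain ⟨hdeg, hcoeff⟩ := hu
  refine ⟨ne_zero_iff.2 ⟨u, hcoeff⟩, ?_⟩
  have hdegT : weightedTotalDegree w (T g) = weight w u :=
    weightedTotalDegree_eq_weight_of_coeff_eq_coeff (hT g) (fun a b => (he a b).1) hcoeff hdeg
  rw [hdegT, ← hdeg]
  refine map_weightedHomogeneousComponent_weight hT (fun a b => ?_) g u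
  simp only [le_antisymm_iff, he]

end LeadingComponent

theorem wtOf_eq_weight {n : ℕ} (lam : Fin n → ℕ) (m : Fin n →₀ ℕ) : wtOf lam m = weight lam m := by
  rw [wtOf, weight_apply, Finsupp.sum_fintype _ _ fun i => zero_smul ℕ (lam i)]
  simp only [smul_eq_mul, mul_comm]

theorem initForm_eq_weightedHomogeneousComponent {R : Type*} [CommRing R] {n : ℕ}
    (lam : Fin n → ℕ) (g : MvPolynomial (Fin n) R) :
    initForm lam g = weightedHomogeneousComponent lam (weightedTotalDegree lam g) g := by
  classical
  rw [initForm, weightedHomogeneousComponent_apply]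
  refine Finset.sum_congr (Finset.filter_congr fun m hm => ?_) fun _ _ => rfl
  simp only [wtOf_eq_weight, weight_eq_weightedTotalDegree_iff hm]

section TraceExponent

variable {σ : Type*} [Finite σ] {p : ℕ}

/-- The exponent vector `p • u + (p - 1, …, p - 1)` of the only monomial that `Tr` sends to the
monomial with exponent vector `u`, for `p > 0`. -/
noncomputable def trExponent (p : ℕ) (u : σ →₀ ℕ) : σ →₀ ℕ :=
  p • u + Finsupp.equivFunOnFinite.symm fun _ => p - 1

theorem weight_trExponent_le_iff {M : Type*} [AddCommMonoid M] [LinearOrder M]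
    [IsOrderedCancelAddMonoid M] (hp : 0 < p) (w : σ → M) (a b : σ →₀ ℕ) :
    weight w (trExponent p a) ≤ weight w (trExponent p b) ↔ weight w a ≤ weight w b := by
  simp only [trExponent, map_add, map_nsmul, add_le_add_iff_right,
    nsmul_le_nsmul_iff_right hp.ne']

theorem dvd_add_one_and_div_sub_one_eq_iff (hp : 0 < p) {a b : ℕ} :
    p ∣ a + 1 ∧ (a + 1) / p - 1 = b ↔ a = p * b + (p - 1) := by
  constructor
  · rintro ⟨⟨c, hc⟩, rfl⟩
    obtain ⟨d, rfl⟩ : ∃ d, c = d + 1 := Nat.exists_eq_add_one_of_ne_zero (by rintro rfl; omega)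
    rw [hc, Nat.mul_div_cancel_left _ hp, Nat.add_sub_cancel]
    rw [mul_add_one] at hc
    omega
  · rintro rfl
    have hsucc : p * b + (p - 1) + 1 = p * (b + 1) := by rw [mul_add_one]; omega
    rw [hsucc, Nat.mul_div_cancel_left _ hp]
    exact ⟨dvd_mul_right p (b + 1), Nat.add_sub_cancel b 1⟩

theorem forall_dvd_add_one_and_eq_iff_eq_trExponent (hp : 0 < p) (m u : σ →₀ ℕ) :
    ((∀ i, p ∣ m i + 1) ∧ Finsupp.equivFunOnFinite.symm (fun i => (m i + 1) / p - 1) = u) ↔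
      m = trExponent p u := by
  simp only [Finsupp.ext_iff, Finsupp.equivFunOnFinite_symm_apply_apply, ← forall_and,
    dvd_add_one_and_div_sub_one_eq_iff hp, trExponent, Finsupp.add_apply, Finsupp.smul_apply,
    smul_eq_mul]

theorem coeff_Tr {n : ℕ} (hp : 0 < p) (g : MvPolynomial (Fin n) (ZMod p)) (u : Fin n →₀ ℕ) :
    coeff u (Tr p n g) = coeff (trExponent p u) g := by
  classical
  calc coeff u (Tr p n g)
    _ = ∑ m ∈ g.support, if m = trExponent p u then coeff m g else 0 := by
      simp only [Tr, coeff_sum, apply_ite (coeff u), coeff_monomial, coeff_zero, ← ite_and,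
        forall_dvd_add_one_and_eq_iff_eq_trExponent hp]
    _ = coeff (trExponent p u) g := by
      rw [Finset.sum_ite_eq', ite_eq_left_iff]
      exact fun hu => (notMem_support_iff.1 hu).symm

end TraceExponent

theorem stmt_13_general {p : ℕ} (hp : 0 < p) {n : ℕ} (lam : Fin n → ℕ)
    (g : MvPolynomial (Fin n) (ZMod p)) :
    Tr p n (initForm lam g) = 0 ∨
      (Tr p n g ≠ 0 ∧ Tr p n (initForm lam g) = initForm lam (Tr p n g)) := by
  simp only [initForm_eq_weightedHomogeneousComponent]
  exact map_weightedHomogeneousComponent_weightedTotalDegree_eq_zero_or (coeff_Tr hp)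
    (weight_trExponent_le_iff hp lam) g

/-- for any weighting `λ` and nonzero `g`, either `Tr(init_λ(g)) = 0`, or
`Tr(g) ≠ 0` and `Tr(init_λ(g)) = init_λ(Tr(g))`. -/
theorem stmt_13 {p : ℕ} (hp : p.Prime) {n : ℕ} (hn : 1 ≤ n) (lam : Fin n → ℕ)
    (g : MvPolynomial (Fin n) (ZMod p)) (hg : g ≠ 0) :
    Tr p n (initForm lam g) = 0 ∨
      (Tr p n g ≠ 0 ∧ Tr p n (initForm lam g) = initForm lam (Tr p n g)) :=
  stmt_13_general hp.pos lam g
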